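/- Let q, a, B be nonzero complex numbers such that q^m ≠ 1 for all m ≥ 1, a q^m ≠ 1 and a^2 q^{2m} ≠ 1 for all m ≥ 1, a q^{2r} ≠ -1 for all r ≥ 0, and B q^j ≠ 1 and a q^{j+1} ≠ -B for all j ≥ 0 (so that all denominators below are nonzero). Suppose (α_n, β_n) is a Bailey pair with parameters (a^2, q^2). Define β'_n = ∑_{k=0}^{n} [(-a;q)_{2k} (B^2;q^2)_k (q^{-k+1}/B;q)_{n-k} (B q^k;q)_{n-k} / ((-aq/B;q)_n (B;q)_n (q^2;q^2)_{n-k})] · B^{-k} q^{k - k(k-1)/2} · β_k and α'_r = ((-B;q)_r / (-aq/B;q)_r) · ((1+a)/(1+a q^{2r})) · B^{-r} q^{r - r(r-1)/2} · α_r. Then (α'_n, β'_n) is a Bailey pair with parameters (a, q). -/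

import Mathlib

/-- The finite q-Pochhammer symbol `(x;q)_n = ∏_{j=0}^{n-1} (1 - x q^j)`. -/
noncomputable def qPoch (x q : ℂ) (n : ℕ) : ℂ := ∏ j ∈ Finset.range n, (1 - x * q ^ j)

/-- `(α, β)` is a Bailey pair with parameters `(a, q)`. -/
def IsBaileyPair (a q : ℂ) (α β : ℕ → ℂ) : Prop :=
  ∀ n : ℕ, β n = ∑ r ∈ Finset.range (n + 1), α r / (qPoch q q (n - r) * qPoch (a * q) q (n + r))

lemma qPoch_zero (x q : ℂ) : qPoch x q 0 = 1 := by simp [qPoch]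

lemma qPoch_succ (x q : ℂ) (n : ℕ) : qPoch x q (n+1) = qPoch x q n * (1 - x * q ^ n) := by
  simp [qPoch, Finset.prod_range_succ]

lemma qPoch_add (x q : ℂ) (m n : ℕ) :
    qPoch x q (m+n) = qPoch x q m * qPoch (x * q ^ m) q n := by
  simp only [qPoch, Finset.prod_range_add]
  congr 1
  refine Finset.prod_congr rfl fun j _ => ?_
  rw [pow_add]; ring

lemma qPoch_succ' (x q : ℂ) (n : ℕ) : qPoch x q (n+1) = (1 - x) * qPoch (x * q) q n := by
  rw [add_comm, qPoch_add]
  simp [qPoch]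

lemma qPoch_shift (x q : ℂ) (n : ℕ) :
    (1 - x) * qPoch (x * q) q n = qPoch x q n * (1 - x * q ^ n) := by
  rw [← qPoch_succ', qPoch_succ]

lemma qPoch_ne (x q : ℂ) (n : ℕ) (h : ∀ j : ℕ, x * q ^ j ≠ 1) : qPoch x q n ≠ 0 := by
  unfold qPoch
  refine Finset.prod_ne_zero_iff.2 fun j _ => ?_
  exact sub_ne_zero.2 (Ne.symm (h j))

/-- the core summand -/
noncomputable def cF (q A c : ℂ) (N j : ℕ) : ℂ :=
  qPoch (-A) q (2*j) * q^j * qPoch (-c) q⁻¹ j * qPoch (c*q/q^j) q (N-j) /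
    (qPoch (q^2) (q^2) (N-j) * qPoch (q^2) (q^2) j * qPoch (A^2*q^2) (q^2) j)

/-- the telescoping companion -/
noncomputable def cG (q A c : ℂ) (N j : ℕ) : ℂ :=
  (1 - q^(2*j)) * (qPoch (-A) q (2*j) * q^j * qPoch (-c) q⁻¹ j * qPoch (c*q/q^j) q (N+2-j)) /
    (qPoch (q^2) (q^2) (N+1-j) * qPoch (q^2) (q^2) j * qPoch (A^2*q^2) (q^2) j)

lemma cstep (q A c : ℂ) (hq : q ≠ 0) (hA : A ≠ 0)
    (hq1 : ∀ m : ℕ, 1 ≤ m → q ^ m ≠ 1)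
    (hA1 : ∀ m : ℕ, 1 ≤ m → A * q ^ m ≠ 1)
    (hA2 : ∀ m : ℕ, A * q ^ m ≠ -1) (i j : ℕ) :
    cG q A c (j+i) (j+1) - cG q A c (j+i) j =
      -((1 - (q^(j+i+1))^2) * (q^(j+i+1) - c*q) / q^(j+i+1)) * cF q A c (j+i+1) j
      - (1 + A*c*q^(j+i+1)) * (1 + A*c*q/q^(j+i+1)) / A * cF q A c (j+i) j
      + (1 + A) * (1 - A^2*q^2*c^2) / (A * (1 - A*q)) * cF q (A*q) c (j+i) j := by
  have e1 : j + i + 1 - j = i + 1 := by omega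
  have e2 : j + i - j = i := by omega
  have e3 : j + i + 2 - j = i + 1 + 1 := by omega
  have e4 : j + i + 2 - (j+1) = i + 1 := by omega
  have e5 : j + i + 1 - (j+1) = i := by omega
  have e6 : 2 * (j+1) = 2*j+1+1 := by ring
  have hy : q^j ≠ 0 := pow_ne_zero _ hq
  have hx : q^i ≠ 0 := pow_ne_zero _ hq
  have w1 : c*q/q^(j+1) * q = c*q/q^j := by rw [pow_succ]; field_simp
  have hqq : ∀ n : ℕ, (q^2) * (q^2)^n ≠ 1 := fun n => by
    rw [← pow_succ', ← pow_mul]; exact hq1 _ (by omega)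
  have hAA : ∀ n : ℕ, (A^2*q^2) * (q^2)^n ≠ 1 := fun n h => by
    have : (A * q^(n+1) - 1) * (A * q^(n+1) + 1) = 0 := by
      rw [← sub_eq_zero] at h; rw [← h]; ring
    rcases mul_eq_zero.1 this with h | h
    · exact hA1 (n+1) (by omega) (sub_eq_zero.1 h)
    · exact hA2 (n+1) (eq_neg_of_add_eq_zero_left h)
  have s1 : qPoch (-(A*q)) q (2*j) = qPoch (-A) q (2*j) * (1 + A * q^(2*j)) / (1+A) := by
    have h := qPoch_shift (-A) q (2*j)
    have : 1 + A ≠ 0 := fun h => hA2 0 (by rw [pow_zero, mul_one]; linear_combination h)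
    rw [eq_div_iff this, ← neg_mul]; linear_combination h
  have s2 : qPoch ((A*q)^2*q^2) (q^2) j = qPoch (A^2*q^2) (q^2) j * (1 - A^2*q^2*(q^2)^j) / (1-A^2*q^2) := by
    have h := qPoch_shift (A^2*q^2) (q^2) j
    have : 1 - A^2*q^2 ≠ 0 := fun h => hAA 0 (by rw [pow_zero, mul_one]; linear_combination -h)
    rw [eq_div_iff this, show (A*q)^2*q^2 = A^2*q^2*q^2 by ring]; linear_combination h
  have n1 : qPoch (q^2) (q^2) j ≠ 0 := qPoch_ne _ _ _ hqq
  have n2 : qPoch (q^2) (q^2) i ≠ 0 := qPoch_ne _ _ _ hqq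
  have n3 : qPoch (A^2*q^2) (q^2) j ≠ 0 := qPoch_ne _ _ _ hAA
  have m1 : 1 - q^2 * (q^2)^i ≠ 0 := sub_ne_zero.2 (hqq i).symm
  have m2 : 1 - q^2 * (q^2)^j ≠ 0 := sub_ne_zero.2 (hqq j).symm
  have m3 : 1 - A^2*q^2 * (q^2)^j ≠ 0 := sub_ne_zero.2 (hAA j).symm
  have m4 : 1 - A*q ≠ 0 := fun h => hA1 1 le_rfl (by rw [pow_one]; linear_combination -h)
  have m5 : 1 + A ≠ 0 := fun h => hA2 0 (by rw [pow_zero, mul_one]; linear_combination h)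
  have m6 : 1 + A*q ≠ 0 := fun h => hA2 1 (by rw [pow_one]; linear_combination h)
  unfold cF cG
  rw [s1, s2, e1, e2, e3, e4, e5, e6]
  rw [qPoch_succ' (c*q/q^(j+1)), w1]
  simp only [qPoch_succ]
  generalize qPoch (q^2) (q^2) j = P1 at *
  generalize qPoch (q^2) (q^2) i = P2 at *
  generalize qPoch (A^2*q^2) (q^2) j = P3 at *
  generalize qPoch (-A) q (2*j) = P4 at *
  generalize qPoch (-c) q⁻¹ j = P5 at *
  generalize qPoch (c*q/q^j) q i = P6 at *
  have f : 1 - A^2*q^2 = (1-A*q)*(1+A*q) := by ring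
  rw [f]
  have p1 : (q^2)^j = (q^j)^2 := by ring
  have p2 : (q^2)^i = (q^i)^2 := by ring
  have p3 : q^(2*j) = (q^j)^2 := by ring
  have p4 : q^(2*j+1) = (q^j)^2*q := by ring
  have p5 : q^(2*j+1+1) = (q^j)^2*q^2 := by ring
  have p6 : q^(j+i+1) = q^j*q^i*q := by ring
  have p7 : q^(j+1) = q^j*q := by ring
  have p8 : q^(i+1) = q^i*q := by ring
  rw [p1] at m2 m3
  rw [p2] at m1
  simp only [p1,p2,p3,p4,p5,p6,p7,p8, inv_pow]
  generalize q^j = y at *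
  generalize q^i = x at *
  clear p1 p2 p3 p4 p5 p6 p7 p8 s1 s2 w1 hqq hAA e1 e2 e3 e4 e5 e6 hA1 hA2 hq1
  have key : ∀ u v : ℂ, u = v → P4*P5*P6/(P1*P2*P3) * u = P4*P5*P6/(P1*P2*P3) * v :=
    fun u v h => by rw [h]
  have := key
    (((1-y^2*q^2)*((1+A*y^2)*(1+A*(y^2*q))*(y*q)*(1+c*y⁻¹)*(1-c*q/(y*q))))/((1-q^2*y^2)*(1-A^2*q^2*y^2))
     - ((1-y^2)*y*((1-c*q/y*x)*(1-c*q/y*(x*q))))/(1-q^2*x^2))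
    (-((1 - (y*x*q)^2) * (y*x*q - c*q) / (y*x*q)) * (y*(1-c*q/y*x)/(1-q^2*x^2))
      - (1 + A*c*(y*x*q)) * (1 + A*c*q/(y*x*q)) / A * y
      + (1 + A) * (1 - A^2*q^2*c^2) / (A * (1 - A*q)) * (y*((1+A*y^2)/(1+A))*(((1-A*q)*(1+A*q))/(1-A^2*q^2*y^2)))) ?_
  · convert this using 1
    · generalize 1 - q^2*x^2 = D1 at *
      generalize 1 - q^2*y^2 = D2 at *
      generalize 1 - A^2*q^2*y^2 = D3 at *
      field_simp
      ring
    · generalize 1 - q^2*x^2 = D1 at *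
      generalize 1 - A^2*q^2*y^2 = D3 at *
      generalize 1 - A*q = D4 at *
      generalize 1 + A = D5 at *
      field_simp
  · generalize h1 : 1 - q^2*x^2 = D1 at *
    generalize h2 : 1 - q^2*y^2 = D2 at *
    generalize h3 : 1 - A^2*q^2*y^2 = D3 at *
    generalize h4 : 1 - A*q = D4 at *
    generalize h5 : 1 + A = D5 at *
    field_simp
    rw [← h1, ← h2, ← h3]
    ring

lemma core (q c : ℂ) (hq : q ≠ 0) (hq1 : ∀ m : ℕ, 1 ≤ m → q ^ m ≠ 1)
    (hc : ∀ j : ℕ, q ^ j ≠ c) (N : ℕ) : ∀ A : ℂ, A ≠ 0 →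
    (∀ m : ℕ, 1 ≤ m → A * q ^ m ≠ 1) → (∀ m : ℕ, A * q ^ m ≠ -1) →
    ∑ j ∈ Finset.range (N+1), cF q A c N j =
      qPoch (-(A*q*c)) q N / (qPoch q q N * qPoch (A*q) q N) := by
  induction N with
  | zero => intro A _ _ _; simp [cF, qPoch_zero]
  | succ N ih =>
    intro A hA hA1 hA2
    have hA1' : ∀ m : ℕ, 1 ≤ m → A * q * q ^ m ≠ 1 := fun m _ => by
      rw [mul_assoc, ← pow_succ']; exact hA1 _ (by omega)
    have hA2' : ∀ m : ℕ, A * q * q ^ m ≠ -1 := fun m => by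
      rw [mul_assoc, ← pow_succ']; exact hA2 _
    have i1 := ih A hA hA1 hA2
    have i2 := ih (A*q) (mul_ne_zero hA hq) hA1' hA2'
    have tel : ∀ m, m ≤ N+1 → cG q A c N m = ∑ j ∈ Finset.range m,
      (-((1 - (q^(N+1))^2) * (q^(N+1) - c*q) / q^(N+1)) * cF q A c (N+1) j
      - (1 + A*c*q^(N+1)) * (1 + A*c*q/q^(N+1)) / A * cF q A c N j
      + (1 + A) * (1 - A^2*q^2*c^2) / (A * (1 - A*q)) * cF q (A*q) c N j) := by
      intro m
      induction m with
      | zero => intro _; simp [cG]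
      | succ j ihj =>
        intro hj
        rw [Finset.sum_range_succ, ← ihj (by omega)]
        obtain ⟨i, rfl⟩ := Nat.exists_eq_add_of_le (show j ≤ N by omega)
        rw [← cstep q A c hq hA hq1 hA1 hA2 i j]; ring
    have t := tel (N+1) le_rfl
    rw [Finset.sum_add_distrib, Finset.sum_sub_distrib, ← Finset.mul_sum, ← Finset.mul_sum,
      ← Finset.mul_sum, i1, i2] at t
    rw [Finset.sum_range_succ]
    have hQ : q^N ≠ 0 := pow_ne_zero _ hq
    have g : cG q A c N (N+1) = (1 - (q^(N+1))^2) * (q^(N+1) - c*q) / q^(N+1) * cF q A c (N+1) (N+1) := by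
      unfold cG cF
      rw [show N+2-(N+1) = 0+1 by omega, Nat.sub_self]
      simp only [qPoch_succ, qPoch_zero]
      have : q^(N+1) ≠ 0 := pow_ne_zero _ hq
      have e : q^(2*(N+1)) = (q^(N+1))^2 := by ring
      rw [e]
      generalize q^(N+1) = Q at *
      have : (1 - c*q/Q*q^0) = (Q - c*q)/Q := by field_simp
      rw [this]
      ring
    rw [g] at t
    generalize ∑ j ∈ Finset.range (N+1), cF q A c (N+1) j = S at *
    generalize cF q A c (N+1) (N+1) = L at *
    have a1 : (1 - (q^(N+1))^2) ≠ 0 := by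
      rw [← pow_mul]; exact sub_ne_zero.2 (hq1 _ (by omega)).symm
    have a2 : q^(N+1) - c*q ≠ 0 := by
      rw [pow_succ, ← sub_mul]; exact mul_ne_zero (sub_ne_zero.2 (hc N)) hq
    have b1 : 1 - q * q^N ≠ 0 := by
      rw [← pow_succ']; exact sub_ne_zero.2 (hq1 _ (by omega)).symm
    have b2 : 1 - A * q * q^N ≠ 0 := by
      rw [mul_assoc, ← pow_succ']; exact sub_ne_zero.2 (hA1 _ (by omega)).symm
    have m4 : 1 - A*q ≠ 0 := fun h => hA1 1 le_rfl (by rw [pow_one]; linear_combination -h)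
    have n1 : qPoch q q N ≠ 0 := qPoch_ne _ _ _ fun n => by
      rw [← pow_succ']; exact hq1 _ (by omega)
    have n2 : qPoch (A*q) q N ≠ 0 := qPoch_ne _ _ _ fun n => by
      rw [mul_assoc, ← pow_succ']; exact hA1 _ (by omega)
    have s1 : qPoch (A*q*q) q N = qPoch (A*q) q N * (1 - A*q*q^N)/(1-A*q) := by
      rw [eq_div_iff m4, ← qPoch_shift]; ring
    have s2 : (1 + A*q*c) * qPoch (-(A*q*q*c)) q N = qPoch (-(A*q*c)) q N * (1 + A*q*c*q^N) := by
      have := qPoch_shift (-(A*q*c)) q N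
      rw [show -(A*q*q*c) = -(A*q*c)*q by ring]; linear_combination this
    rw [qPoch_succ, qPoch_succ, qPoch_succ]
    rw [s1] at t
    have key : (1 - (q^(N+1))^2) * (q^(N+1) - c*q) / q^(N+1) * (S + L) =
      - (1 + A*c*q^(N+1)) * (1 + A*c*q/q^(N+1)) / A * (qPoch (-(A*q*c)) q N / (qPoch q q N * qPoch (A*q) q N))
      + (1 + A) * (1 - A*q*c) / A / (qPoch q q N * (qPoch (A*q) q N * (1 - A*q*q^N))) * (qPoch (-(A*q*c)) q N * (1 + A*q*c*q^N)) := by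
      rw [← s2]
      have : (1 + A) * (1 - A ^ 2 * q ^ 2 * c ^ 2) / (A * (1 - A * q)) *
        (qPoch (-(A * q * q * c)) q N / (qPoch q q N * (qPoch (A * q) q N * (1 - A * q * q ^ N) / (1 - A * q)))) = (1 + A) * (1 - A*q*c) / A / (qPoch q q N * (qPoch (A*q) q N * (1 - A*q*q^N))) * ((1 + A*q*c) * qPoch (-(A*q*q*c)) q N) := by
        field_simp
        ring
      rw [← this]
      linear_combination t
    have hne : (1 - (q^(N+1))^2) * (q^(N+1) - c*q) / q^(N+1) ≠ 0 :=
      div_ne_zero (mul_ne_zero a1 a2) (pow_ne_zero _ hq)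
    apply mul_left_cancel₀ hne
    rw [key]
    have p6 : q^(N+1) = q^N*q := by ring
    simp only [p6]
    generalize qPoch (-(A*q*c)) q N = P1 at *
    generalize qPoch q q N = P2 at *
    generalize qPoch (A*q) q N = P3 at *
    generalize q^N = Q at *
    generalize h1 : 1 - q*Q = D1 at *
    generalize h2 : 1 - A*q*Q = D2 at *
    field_simp
    rw [← h1, ← h2]
    ring

lemma qPoch_sq (x q : ℂ) (n : ℕ) : qPoch (x^2) (q^2) n = qPoch x q n * qPoch (-x) q n := by
  simp only [qPoch, ← Finset.prod_mul_distrib]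
  refine Finset.prod_congr rfl fun j _ => ?_
  ring

lemma Efac_succ (q B : ℂ) (hq : q ≠ 0) (hB : B ≠ 0) (k : ℕ) :
    B ^ (-((k+1 : ℕ) : ℤ)) * q ^ (((k+1 : ℕ) : ℤ) - (((k+1) * (k+1-1) / 2 : ℕ) : ℤ)) =
    B ^ (-(k : ℤ)) * q ^ ((k : ℤ) - ((k * (k - 1) / 2 : ℕ) : ℤ)) * (q / (B * q^k)) := by
  rw [Nat.triangle_succ]
  generalize k * (k-1) / 2 = t
  push_cast
  rw [show (-((k:ℤ)+1)) = -(k:ℤ) - 1 by ring,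
    show ((k:ℤ) + 1 - ((t:ℤ) + k)) = ((k:ℤ) - t) + 1 - k by ring,
    zpow_sub₀ hB, zpow_sub₀ hq, zpow_add₀ hq, zpow_natCast, zpow_one, zpow_one]
  field_simp

lemma Efac (q B : ℂ) (hq : q ≠ 0) (hB : B ≠ 0) (r j : ℕ) :
    qPoch (-B) q (r+j) *
      (B ^ (-((r+j : ℕ) : ℤ)) * q ^ (((r+j : ℕ) : ℤ) - (((r+j) * (r+j-1) / 2 : ℕ) : ℤ))) =
    qPoch (-B) q r * (B ^ (-(r : ℤ)) * q ^ ((r : ℤ) - ((r * (r - 1) / 2 : ℕ) : ℤ))) *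
      (q^j * qPoch (-(1/(B*q^r))) q⁻¹ j) := by
  induction j with
  | zero => simp [qPoch_zero]
  | succ j ih =>
    rw [← add_assoc, Efac_succ q B hq hB, qPoch_succ, qPoch_succ _ _ j]
    have hr : q^r ≠ 0 := pow_ne_zero _ hq
    have hj : q^j ≠ 0 := pow_ne_zero _ hq
    have : (1 - -B * q^(r+j)) * (q/(B*q^(r+j))) = q * (1 - -(1/(B*q^r)) * q⁻¹^j) := by
      rw [pow_add, inv_pow]; field_simp; ring
    rw [pow_succ]
    linear_combination (1 - -B * q^(r+j)) * (q/(B*q^(r+j))) * ih + qPoch (-B) q r * (B ^ (-(r : ℤ)) * q ^ ((r : ℤ) - ((r * (r - 1) / 2 : ℕ) : ℤ))) *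
      (q^j * qPoch (-(1/(B*q^r))) q⁻¹ j) * this

lemma inner (q a B : ℂ)
    (hq : q ≠ 0) (ha : a ≠ 0) (hB : B ≠ 0)
    (hq1 : ∀ m : ℕ, 1 ≤ m → q ^ m ≠ 1)
    (ha1 : ∀ m : ℕ, 1 ≤ m → a * q ^ m ≠ 1)
    (ha2 : ∀ m : ℕ, 1 ≤ m → a ^ 2 * q ^ (2 * m) ≠ 1)
    (har : ∀ r : ℕ, a * q ^ (2 * r) ≠ -1)
    (hB1 : ∀ j : ℕ, B * q ^ j ≠ 1)
    (hB2 : ∀ j : ℕ, a * q ^ (j + 1) ≠ -B) (r N : ℕ) :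
    ∑ j ∈ Finset.range (N+1),
      (qPoch (-a) q (2 * (r+j)) * qPoch (B ^ 2) (q ^ 2) (r+j) *
            qPoch (q ^ (1 - ((r+j : ℕ) : ℤ)) / B) q (N - j) * qPoch (B * q ^ (r+j)) q (N - j)) /
          (qPoch (-(a * q) / B) q (r+N) * qPoch B q (r+N) * qPoch (q ^ 2) (q ^ 2) (N - j)) *
          B ^ (-((r+j : ℕ) : ℤ)) * q ^ (((r+j : ℕ) : ℤ) - (((r+j) * (r+j - 1) / 2 : ℕ) : ℤ)) *
          (1 / (qPoch (q^2) (q^2) j * qPoch (a^2 * q^2) (q^2) (r + j + r))) =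
    qPoch (-B) q r / qPoch (-(a * q) / B) q r * ((1 + a) / (1 + a * q ^ (2 * r))) *
        B ^ (-(r : ℤ)) * q ^ ((r : ℤ) - ((r * (r - 1) / 2 : ℕ) : ℤ)) *
        (1 / (qPoch q q N * qPoch (a * q) q (r + N + r))) := by
  have hr : q^r ≠ 0 := pow_ne_zero _ hq
  have haneg : ∀ m : ℕ, a * q^m ≠ -1 := by
    intro m h
    rcases Nat.eq_zero_or_pos m with rfl | hm
    · exact har 0 (by simpa using h)
    · exact ha2 m hm (by rw [show a^2*q^(2*m) = (a*q^m)^2 by ring, h]; ring)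
  have hc : ∀ j : ℕ, q^j ≠ 1/(B*q^r) := fun j h => hB1 (r+j) (by
    rw [eq_div_iff (mul_ne_zero hB hr)] at h; rw [← h]; ring)
  have hcore := core q (1/(B*q^r)) hq hq1 hc N (a*q^(2*r)) (mul_ne_zero ha (pow_ne_zero _ hq))
    (fun m hm => by rw [mul_assoc, ← pow_add]; exact ha1 _ (by omega))
    (fun m => by rw [mul_assoc, ← pow_add]; exact haneg _)
  have hA : ∀ n, qPoch (-(a*q)/B) q n ≠ 0 := fun n => qPoch_ne _ _ _ fun j h => hB2 j (by
    field_simp at h; rw [pow_succ]; linear_combination -h)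
  have e1 : qPoch (-(a*q)/B) q (r+N) = qPoch (-(a*q)/B) q r *
      qPoch (-(a*q^(2*r)*q*(1/(B*q^r)))) q N := by
    rw [qPoch_add]; congr 2; field_simp; ring
  have hAN : qPoch (-(a*q^(2*r)*q*(1/(B*q^r)))) q N ≠ 0 := fun h => hA (r+N) (by rw [e1, h, mul_zero])
  have nB : ∀ n, qPoch B q n ≠ 0 := fun n => qPoch_ne _ _ _ hB1
  have nq : ∀ n, qPoch q q n ≠ 0 := fun n => qPoch_ne _ _ _ fun n => by
      rw [← pow_succ']; exact hq1 _ (by omega)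
  have naq : ∀ n, qPoch (a*q) q n ≠ 0 := fun n => qPoch_ne _ _ _ fun n => by
      rw [mul_assoc, ← pow_succ']; exact ha1 _ (by omega)
  have nnaq : ∀ n, qPoch (-(a*q)) q n ≠ 0 := fun n => qPoch_ne _ _ _ fun n h => haneg (n+1) (by
      rw [pow_succ]; linear_combination -h)
  have naa : ∀ n, qPoch (a^2*q^2) (q^2) n ≠ 0 := fun n => by
    rw [← mul_pow, qPoch_sq]; exact mul_ne_zero (naq n) (nnaq n)
  have term : ∀ j ∈ Finset.range (N+1),
      (qPoch (-a) q (2 * (r+j)) * qPoch (B ^ 2) (q ^ 2) (r+j) *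
            qPoch (q ^ (1 - ((r+j : ℕ) : ℤ)) / B) q (N - j) * qPoch (B * q ^ (r+j)) q (N - j)) /
          (qPoch (-(a * q) / B) q (r+N) * qPoch B q (r+N) * qPoch (q ^ 2) (q ^ 2) (N - j)) *
          B ^ (-((r+j : ℕ) : ℤ)) * q ^ (((r+j : ℕ) : ℤ) - (((r+j) * (r+j - 1) / 2 : ℕ) : ℤ)) *
          (1 / (qPoch (q^2) (q^2) j * qPoch (a^2 * q^2) (q^2) (r + j + r))) =
      (qPoch (-a) q (2*r) * (qPoch (-B) q r *
        (B ^ (-(r : ℤ)) * q ^ ((r : ℤ) - ((r * (r - 1) / 2 : ℕ) : ℤ)))) /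
        (qPoch (-(a*q)/B) q (r+N) * qPoch (a^2*q^2) (q^2) (2*r))) *
        cF q (a*q^(2*r)) (1/(B*q^r)) N j := by
    intro j hj
    have hj' : j ≤ N := by simpa [Nat.lt_succ_iff] using hj
    have hqj : q^j ≠ 0 := pow_ne_zero _ hq
    have t1 : qPoch (-a) q (2*(r+j)) = qPoch (-a) q (2*r) * qPoch (-(a*q^(2*r))) q (2*j) := by
      rw [mul_add, qPoch_add, neg_mul]
    have t2 : qPoch B q (r+N) = qPoch B q (r+j) * qPoch (B*q^(r+j)) q (N-j) := by
      rw [← qPoch_add]; congr 1; omega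
    have t3 : q ^ (1 - ((r+j : ℕ) : ℤ)) / B = 1/(B*q^r)*q/q^j := by
      rw [zpow_sub₀ hq, zpow_natCast, zpow_one, pow_add]; field_simp
    have t4 : qPoch (a^2*q^2) (q^2) (r+j+r) = qPoch (a^2*q^2) (q^2) (2*r) *
        qPoch ((a*q^(2*r))^2*q^2) (q^2) j := by
      rw [show r+j+r = 2*r+j by ring, qPoch_add]; congr 2; ring
    have nB2 : qPoch (B*q^(r+j)) q (N-j) ≠ 0 := fun h => nB (r+N) (by rw [t2, h, mul_zero])
    have E := Efac q B hq hB r j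
    unfold cF
    rw [t1, t2, t3, t4, qPoch_sq B]
    have nBj := nB (r+j)
    generalize qPoch (B*q^(r+j)) q (N-j) = X1 at *
    generalize qPoch B q (r+j) = X2 at *
    generalize B ^ (-((r+j : ℕ) : ℤ)) = X3 at *
    generalize q ^ (((r+j : ℕ) : ℤ) - (((r+j) * (r+j - 1) / 2 : ℕ) : ℤ)) = X4 at *
    rw [show ∀ X5 X6 X7 X8 X9 X10 X11 X12 X13 : ℂ, X5 * X6 * (X2 * X7) * X8 * X1 / (X9 * (X2*X1)*X10) * X3 * X4 * (1/(X11*(X12*X13))) = (X5 * X6 * X8 / (X9 *X10 * X11*X12*X13)) * (X7 * (X3 * X4)) from ?_, E]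
    · simp only [div_eq_mul_inv, mul_inv]
      ring
    · intros
      rw [show ∀ X5 X6 X7 X8 X9 X10 : ℂ, X5 * X6 * (X2 * X7) * X8 * X1 / (X9 * (X2*X1)*X10) = X5 * X6 * X7 * X8 / (X9 * X10) from ?_]
      · simp only [div_eq_mul_inv, mul_inv]
        ring
      · intro X5 X6 X7 X8 X9 X10
        rw [show X5 * X6 * (X2 * X7) * X8 * X1 = (X5*X6*X7*X8)*(X2*X1) by ring,
          show X9 * (X2*X1)*X10 = X9*X10*(X2*X1) by ring,
          mul_div_mul_right _ _ (mul_ne_zero nBj nB2)]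
  rw [Finset.sum_congr rfl term, ← Finset.mul_sum, hcore, e1]
  have u1 : qPoch (a*q) q (r+N+r) = qPoch (a*q) q (2*r) * qPoch (a*q^(2*r)*q) q N := by
    rw [show r+N+r = 2*r+N by ring, qPoch_add]; congr 2; ring
  have hAq : qPoch (a*q^(2*r)*q) q N ≠ 0 := fun h => naq (r+N+r) (by rw [u1, h, mul_zero])
  have u2 : qPoch (a^2*q^2) (q^2) (2*r) = qPoch (a*q) q (2*r) * qPoch (-(a*q)) q (2*r) := by
    rw [← mul_pow, qPoch_sq]
  have m1 : 1 + a*q^(2*r) ≠ 0 := fun h => har r (by linear_combination h)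
  have u3 : qPoch (-a) q (2*r) = (1+a)/(1+a*q^(2*r)) * qPoch (-(a*q)) q (2*r) := by
    have := qPoch_shift (-a) q (2*r)
    rw [neg_mul] at this
    rw [div_mul_eq_mul_div, eq_div_iff m1]; linear_combination -this
  rw [u1, u2, u3]
  have n1 := naq (2*r)
  have n2 := nnaq (2*r)
  have n3 := nq N
  have n4 := hA r
  generalize qPoch (-(a*q^(2*r)*q*(1/(B*q^r)))) q N = Y1 at *
  generalize qPoch (a*q^(2*r)*q) q N = Y2 at *
  generalize qPoch (a*q) q (2*r) = Y3 at *
  generalize qPoch (-(a*q)) q (2*r) = Y4 at *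
  generalize qPoch q q N = Y5 at *
  generalize qPoch (-(a*q)/B) q r = Y6 at *
  generalize qPoch (-B) q r = Y7 at *
  generalize (1+a)/(1+a*q^(2*r)) = Y8 at *
  generalize B ^ (-(r : ℤ)) = Y9 at *
  generalize q ^ ((r : ℤ) - ((r * (r - 1) / 2 : ℕ) : ℤ)) = Y10 at *
  field_simp

/-- Theorem 2.5: a companion base change from `(a², q²)` to `(a, q)`. -/
theorem bailey_base_change_thm25 (q a B : ℂ)
    (hq : q ≠ 0) (ha : a ≠ 0) (hB : B ≠ 0)
    (hq1 : ∀ m : ℕ, 1 ≤ m → q ^ m ≠ 1)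
    (ha1 : ∀ m : ℕ, 1 ≤ m → a * q ^ m ≠ 1)
    (ha2 : ∀ m : ℕ, 1 ≤ m → a ^ 2 * q ^ (2 * m) ≠ 1)
    (har : ∀ r : ℕ, a * q ^ (2 * r) ≠ -1)
    (hB1 : ∀ j : ℕ, B * q ^ j ≠ 1)
    (hB2 : ∀ j : ℕ, a * q ^ (j + 1) ≠ -B)
    (α β : ℕ → ℂ)
    (hpair : IsBaileyPair (a ^ 2) (q ^ 2) α β) :
    IsBaileyPair a q
      (fun r => qPoch (-B) q r / qPoch (-(a * q) / B) q r * ((1 + a) / (1 + a * q ^ (2 * r))) *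
        B ^ (-(r : ℤ)) * q ^ ((r : ℤ) - ((r * (r - 1) / 2 : ℕ) : ℤ)) * α r)
      (fun n => ∑ k ∈ Finset.range (n + 1),
        (qPoch (-a) q (2 * k) * qPoch (B ^ 2) (q ^ 2) k *
            qPoch (q ^ (1 - (k : ℤ)) / B) q (n - k) * qPoch (B * q ^ k) q (n - k)) /
          (qPoch (-(a * q) / B) q n * qPoch B q n * qPoch (q ^ 2) (q ^ 2) (n - k)) *
          B ^ (-(k : ℤ)) * q ^ ((k : ℤ) - ((k * (k - 1) / 2 : ℕ) : ℤ)) * β k) := by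

  intro n
  simp only
  have h1 : ∀ k ∈ Finset.range (n+1), β k = ∑ r ∈ Finset.range (k+1),
      α r * (1 / (qPoch (q^2) (q^2) (k - r) * qPoch (a^2 * q^2) (q^2) (k + r))) := by
    intro k _
    rw [hpair k]
    exact Finset.sum_congr rfl fun r _ => by rw [mul_one_div]
  rw [Finset.sum_congr rfl fun k hk => by rw [h1 k hk, Finset.mul_sum]]
  rw [Finset.sum_comm' (t' := Finset.range (n+1)) (s' := fun r => Finset.Ico r (n+1))
    (by intro x y; simp only [Finset.mem_range, Finset.mem_Ico]; omega)]
  refine Finset.sum_congr rfl fun r hr => ?_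
  obtain ⟨N, rfl⟩ := Nat.exists_eq_add_of_le (show r ≤ n by simpa [Nat.lt_succ_iff] using hr)
  rw [Finset.sum_Ico_eq_sum_range, show r + N + 1 - r = N + 1 by omega, Nat.add_sub_cancel_left]
  have h := inner q a B hq ha hB hq1 ha1 ha2 har hB1 hB2 r N
  refine Eq.trans ?_ (Eq.trans (congrArg (fun x => x * α r) h) ?_)
  · rw [Finset.sum_mul]
    refine Finset.sum_congr rfl fun j hj => ?_
    rw [show r + N - (r + j) = N - j by omega, Nat.add_sub_cancel_left]
    rw [mul_comm (α r), ← mul_assoc]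
  · skip
    rw [mul_right_comm, mul_one_div]
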